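/- Let Φ be a reduced crystallographic root system in a finite-dimensional real inner product space, with a fixed base (set of simple roots) Δ and Weyl group W. Fix a simple root α ∈ Δ and set θ = Δ \ {α}. Then there exists a unique element w ∈ W such that w maps every root in θ to a simple root (i.e. w(θ) ⊆ Δ) while w(α) is a negative root with respect to Δ. -/

import Mathlib

/-!
STATEMENT 0: Let Φ be a reduced crystallographic root system in a finite-dimensional real
inner product space, with a fixed base (set of simple roots) Δ and Weyl group W.
Fix a simple root α ∈ Δ and set θ = Δ \ {α}.  Then there exists a unique element w ∈ W
such that w maps every root in θ to a simple root (w(θ) ⊆ Δ) while w(α) is a negative root.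
-/

open scoped InnerProductSpace

variable {V : Type*} [NormedAddCommGroup V] [InnerProductSpace ℝ V]

/-- The set of reflections `s_a : x ↦ x - (2⟪x,a⟫/⟪a,a⟫)·a` in the roots `a ∈ Φ`,
viewed as linear automorphisms of the ambient space. -/
def rootReflections (Φ : Finset V) : Set (V ≃ₗ[ℝ] V) :=
  {f | ∃ a ∈ Φ, ∀ x : V, f x = x - (2 * ⟪x, a⟫_ℝ / ⟪a, a⟫_ℝ) • a}

/-- The Weyl group of `Φ`: the subgroup of linear automorphisms generated by the
reflections in the roots. -/
def weylGroup (Φ : Finset V) : Subgroup (V ≃ₗ[ℝ] V) :=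
  Subgroup.closure (rootReflections Φ)

/-- `β` is a negative root of `Φ` with respect to the base `Δ`: it is a root all of whose
coefficients in the (integral) expansion over the simple roots are non-positive. -/
def IsNegRoot (Φ Δ : Finset V) (β : V) : Prop :=
  β ∈ Φ ∧ ∃ c : V → ℤ, β = ∑ γ ∈ Δ, (c γ : ℝ) • γ ∧ ∀ γ ∈ Δ, c γ ≤ 0

/-!
The element sought is `w₀ w_θ`, where `w₀` and `w_θ` are the longest elements of the Weyl group and
of its parabolic subgroup generated by the reflections in `θ`: `w_θ` maps `θ` onto `-θ`, which `w₀`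
maps into `Δ`, while `w_θ α ∈ α + span θ` is still positive and hence made negative by `w₀`.

For uniqueness, let `g` be the functional that reads off the coefficient of `α`. If `w` qualifies,
then `g ∘ w⁻¹` vanishes on the simple roots in `w θ` and is negative on the single remaining one,
so that a root on which it is negative is positive. If `w'` qualifies too, then `w' w⁻¹` maps every
simple root to a positive root, and it is therefore trivial by the exchange condition.
-/

section Reflection

/-- The orthogonal reflection in the hyperplane `aᗮ`, as a linear automorphism. At `a = 0` it is the
identity, in accordance with the junk value of the explicit formula. -/
noncomputable def rootReflection (a : V) : V ≃ₗ[ℝ] V :=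
  (ℝ ∙ a)ᗮ.reflection.toLinearEquiv

lemma rootReflection_apply (a x : V) :
    rootReflection a x = x - (2 * ⟪x, a⟫_ℝ / ⟪a, a⟫_ℝ) • a := by
  simp only [rootReflection, LinearIsometryEquiv.coe_toLinearEquiv,
    Submodule.reflection_orthogonal_apply, Submodule.reflection_singleton_apply,
    real_inner_comm x a, real_inner_self_eq_norm_sq, RCLike.ofReal_real_eq_id, id_eq, neg_sub,
    ← Nat.cast_smul_eq_nsmul ℝ, smul_smul, mul_div_assoc, Nat.cast_ofNat]

lemma rootReflection_self (a : V) : rootReflection a a = -a :=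
  Submodule.reflection_orthogonalComplement_singleton_eq_neg a

lemma rootReflection_smul (a : V) {t : ℝ} (ht : t ≠ 0) :
    rootReflection (t • a) = rootReflection a := by
  simp only [rootReflection, Submodule.span_singleton_smul_eq ht.isUnit]

lemma rootReflection_neg (a : V) : rootReflection (-a) = rootReflection a := by
  simpa using rootReflection_smul a (neg_ne_zero.2 one_ne_zero)

lemma rootReflection_mul_self (a : V) : rootReflection a * rootReflection a = 1 := by
  ext x
  exact Submodule.reflection_reflection (ℝ ∙ a)ᗮ x

lemma rootReflection_inv (a : V) : (rootReflection a)⁻¹ = rootReflection a :=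
  inv_eq_of_mul_eq_one_left (rootReflection_mul_self a)

lemma inner_rootReflection_rootReflection (a x y : V) :
    ⟪rootReflection a x, rootReflection a y⟫_ℝ = ⟪x, y⟫_ℝ :=
  LinearIsometryEquiv.inner_map_map _ x y

lemma mul_rootReflection {w : V ≃ₗ[ℝ] V} (hw : ∀ x y, ⟪w x, w y⟫_ℝ = ⟪x, y⟫_ℝ) (a : V) :
    w * rootReflection a = rootReflection (w a) * w := by
  ext x
  simp only [LinearEquiv.mul_apply, rootReflection_apply, hw, map_sub, map_smul]

lemma rootReflections_eq_image (Φ : Finset V) :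
    rootReflections Φ = rootReflection '' (Φ : Set V) := by
  ext f
  simp only [rootReflections, Set.mem_ofPred_eq, Set.mem_image, Finset.mem_coe, LinearEquiv.ext_iff,
    rootReflection_apply, eq_comm]

end Reflection

section WeylGroup

variable {Φ : Finset V} {w : V ≃ₗ[ℝ] V}

lemma weylGroup_eq_closure_image (Φ : Finset V) :
    weylGroup Φ = Subgroup.closure (rootReflection '' (Φ : Set V)) := by
  rw [weylGroup, rootReflections_eq_image]

lemma rootReflection_mem_weylGroup {a : V} (ha : a ∈ Φ) : rootReflection a ∈ weylGroup Φ := by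
  rw [weylGroup_eq_closure_image]
  exact Subgroup.subset_closure ⟨a, ha, rfl⟩

lemma weylGroup_mono {Ψ : Finset V} (h : Ψ ⊆ Φ) : weylGroup Ψ ≤ weylGroup Φ := by
  simp only [weylGroup_eq_closure_image]
  exact Subgroup.closure_mono (Set.image_mono (Finset.coe_subset.2 h))

@[elab_as_elim]
lemma weylGroup_induction {p : (w : V ≃ₗ[ℝ] V) → w ∈ weylGroup Φ → Prop}
    (one : p 1 (one_mem _))
    (mul : ∀ a (ha : a ∈ Φ) w (hw : w ∈ weylGroup Φ), p w hw →
      p (rootReflection a * w) (mul_mem (rootReflection_mem_weylGroup ha) hw))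
    (hw : w ∈ weylGroup Φ) : p w hw := by
  have hcl := weylGroup_eq_closure_image Φ
  suffices ∀ w (hw : w ∈ Subgroup.closure (rootReflection '' (Φ : Set V))), p w (hcl ▸ hw) from
    this w (hcl ▸ hw)
  intro w hw
  induction hw using Subgroup.closure_induction_left with
  | one => exact one
  | mul_left f hf w hw ih =>
    obtain ⟨a, ha, rfl⟩ := hf
    exact mul a ha w (hcl ▸ hw) ih
  | inv_mul_cancel f hf w hw ih =>
    obtain ⟨a, ha, rfl⟩ := hf
    simp only [rootReflection_inv]
    exact mul a ha w (hcl ▸ hw) ih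

lemma inner_map_map_of_mem_weylGroup (hw : w ∈ weylGroup Φ) (x y : V) :
    ⟪w x, w y⟫_ℝ = ⟪x, y⟫_ℝ := by
  induction hw using weylGroup_induction with
  | one => rfl
  | mul a _ w _ ih =>
    rw [LinearEquiv.mul_apply, LinearEquiv.mul_apply, inner_rootReflection_rootReflection, ih]

lemma map_sub_self_mem_span_of_mem_weylGroup (hw : w ∈ weylGroup Φ) (x : V) :
    w x - x ∈ Submodule.span ℝ (Φ : Set V) := by
  induction hw using weylGroup_induction with
  | one => simp
  | mul a ha w _ ih =>
    rw [LinearEquiv.mul_apply, rootReflection_apply, sub_right_comm]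
    exact sub_mem ih (Submodule.smul_mem _ _ (Submodule.subset_span ha))

lemma map_mem_of_mem_weylGroup (hΦ : ∀ a ∈ Φ, ∀ b ∈ Φ, rootReflection a b ∈ Φ)
    (hw : w ∈ weylGroup Φ) {β : V} (hβ : β ∈ Φ) : w β ∈ Φ := by
  induction hw using weylGroup_induction with
  | one => exact hβ
  | mul a ha w _ ih => exact hΦ a ha _ ih

/-- `w x - x` lies in the span of `Φ`, and it is orthogonal to that span once `w` fixes `Φ`. -/
lemma eq_one_of_forall_map_eq (hw : w ∈ weylGroup Φ) (hfix : ∀ β ∈ Φ, w β = β) : w = 1 := by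
  ext x
  have horth : ∀ β ∈ (Φ : Set V), ⟪β, w x - x⟫_ℝ = 0 := fun β hβ ↦ by
    rw [inner_sub_right, sub_eq_zero, ← inner_map_map_of_mem_weylGroup hw β x, hfix β hβ]
  have hperp : w x - x ∈ (Submodule.span ℝ (Φ : Set V))ᗮ :=
    Submodule.span_le (p := (ℝ ∙ (w x - x))ᗮ).2
      (fun β hβ ↦ Submodule.mem_orthogonal_singleton_iff_inner_left.2 (horth β hβ)) |>
      Submodule.le_orthogonal_iff_le_orthogonal.1 <| Submodule.mem_span_singleton_self _
  exact sub_eq_zero.1 (inner_self_eq_zero.1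
    (hperp _ (map_sub_self_mem_span_of_mem_weylGroup hw x)))

lemma finite_weylGroup (hΦ : ∀ a ∈ Φ, ∀ b ∈ Φ, rootReflection a b ∈ Φ) :
    Finite (weylGroup Φ) := by
  refine Finite.of_injective
    (fun (w : weylGroup Φ) (β : Φ) ↦ (⟨w.1 β, map_mem_of_mem_weylGroup hΦ w.2 β.2⟩ : Φ)) ?_
  intro w w' heq
  have hagree (β : V) (hβ : β ∈ Φ) : w.1 β = w'.1 β := congrArg Subtype.val (congrFun heq ⟨β, hβ⟩)
  refine Subtype.ext (inv_mul_eq_one.1 ?_)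
  refine eq_one_of_forall_map_eq (mul_mem (inv_mem w.2) w'.2) fun β hβ ↦ ?_
  rw [LinearEquiv.mul_apply, ← hagree β hβ]
  exact w.1.symm_apply_apply β

end WeylGroup

open scoped Pointwise in
lemma exists_mem_pow_of_mem_closure {G : Type*} [Group G] {S : Set G} (hS : S⁻¹ = S) {g : G}
    (hg : g ∈ Subgroup.closure S) : ∃ n : ℕ, g ∈ S ^ n := by
  induction hg using Subgroup.closure_induction with
  | mem g hg => exact ⟨1, by rwa [pow_one]⟩
  | one => exact ⟨0, by rw [pow_zero]; rfl⟩
  | mul g g' _ _ ih ih' =>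
    obtain ⟨n, hn⟩ := ih
    obtain ⟨m, hm⟩ := ih'
    exact ⟨n + m, by rw [pow_add]; exact Set.mul_mem_mul hn hm⟩
  | inv g _ ih =>
    obtain ⟨n, hn⟩ := ih
    exact ⟨n, by rwa [← Set.mem_inv, ← inv_pow, hS]⟩

lemma exists_forall_inner_eq {ι : Type*} [Finite ι] {v : ι → V} (hv : LinearIndependent ℝ v)
    (c : ι → ℝ) : ∃ x : V, ∀ i, ⟪x, v i⟫_ℝ = c i := by
  let b := Module.Basis.span hv
  have : FiniteDimensional ℝ (Submodule.span ℝ (Set.range v)) :=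
    FiniteDimensional.span_of_finite ℝ (Set.finite_range v)
  let x := (InnerProductSpace.toDual ℝ _).symm (b.constr ℝ c).toContinuousLinearMap
  refine ⟨x, fun i ↦ ?_⟩
  calc ⟪(x : V), v i⟫_ℝ = ⟪x, b i⟫_ℝ := by rw [Submodule.coe_inner, Module.Basis.span_apply]
    _ = b.constr ℝ c (b i) := InnerProductSpace.toDual_symm_apply
    _ = c i := b.constr_basis ℝ c i

/-- `β` is a positive root of `Φ` with respect to the base `Δ`, the counterpart of `IsNegRoot`. -/
def IsPosRoot (Φ Δ : Finset V) (β : V) : Prop :=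
  β ∈ Φ ∧ ∃ c : V → ℤ, β = ∑ γ ∈ Δ, (c γ : ℝ) • γ ∧ ∀ γ ∈ Δ, 0 ≤ c γ

/-- `Δ` is a base of the root system `Φ`. The root system need be neither reduced nor spanning, and
the ambient space may be infinite-dimensional, so that the notion passes to the root subsystems
generated by subsets of `Δ`. -/
structure IsRootBase (Φ Δ : Finset V) : Prop where
  zero_notMem : (0 : V) ∉ Φ
  rootReflection_mem : ∀ a ∈ Φ, ∀ b ∈ Φ, rootReflection a b ∈ Φ
  subset : (Δ : Set V) ⊆ Φ
  linearIndepOn : LinearIndepOn ℝ id (Δ : Set V)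
  exists_coeff : ∀ β ∈ Φ, ∃ c : V → ℤ,
    β = ∑ γ ∈ Δ, (c γ : ℝ) • γ ∧ ((∀ γ ∈ Δ, 0 ≤ c γ) ∨ (∀ γ ∈ Δ, c γ ≤ 0))

section Positivity

variable {Φ Δ : Finset V} {β : V} {f : V →ₗ[ℝ] ℝ}

lemma map_sum_smul_eq_coeff {c : V → ℝ} {δ : V} (hδ : δ ∈ Δ) (hfδ : f δ = 1)
    (hf : ∀ γ ∈ Δ, γ ≠ δ → f γ = 0) : f (∑ γ ∈ Δ, c γ • γ) = c δ := by
  rw [map_sum, Finset.sum_eq_single_of_mem δ hδ fun γ hγ hne ↦ by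
    rw [map_smul, hf γ hγ hne, smul_zero], map_smul, hfδ, smul_eq_mul, mul_one]

lemma forall_nonneg_of_dual {δ : V} (hfδ : f δ = 1) (hf : ∀ γ ∈ Δ, γ ≠ δ → f γ = 0) :
    ∀ γ ∈ Δ, 0 ≤ f γ := fun γ hγ ↦ by
  rcases eq_or_ne γ δ with rfl | hne
  · exact hfδ ▸ zero_le_one
  · exact (hf γ hγ hne).ge

namespace IsPosRoot

lemma map_nonneg (hβ : IsPosRoot Φ Δ β) (hf : ∀ γ ∈ Δ, 0 ≤ f γ) : 0 ≤ f β := by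
  obtain ⟨-, c, hc, hc0⟩ := hβ
  rw [hc, map_sum]
  refine Finset.sum_nonneg fun γ hγ ↦ ?_
  rw [map_smul]
  exact mul_nonneg (Int.cast_nonneg (hc0 γ hγ)) (hf γ hγ)

lemma exists_nat_eq_map (hβ : IsPosRoot Φ Δ β) (hf : ∀ γ ∈ Δ, f γ = 1) : ∃ n : ℕ, f β = n := by
  obtain ⟨-, c, hc, hc0⟩ := hβ
  obtain ⟨n, hn⟩ := Int.eq_ofNat_of_zero_le (Finset.sum_nonneg hc0)
  refine ⟨n, ?_⟩
  calc f β = ∑ γ ∈ Δ, (c γ : ℝ) := by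
        rw [hc, map_sum]
        exact Finset.sum_congr rfl fun γ hγ ↦ by rw [map_smul, hf γ hγ, smul_eq_mul, mul_one]
    _ = n := mod_cast hn

end IsPosRoot

namespace IsRootBase

variable (h : IsRootBase Φ Δ)
include h

lemma mem_of_mem_base {γ : V} (hγ : γ ∈ Δ) : γ ∈ Φ := Finset.coe_subset.1 h.subset hγ

lemma ne_zero (hβ : β ∈ Φ) : β ≠ 0 := ne_of_mem_of_not_mem hβ h.zero_notMem

lemma neg_mem (hβ : β ∈ Φ) : -β ∈ Φ := by
  simpa only [rootReflection_self] using h.rootReflection_mem β hβ β hβ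

lemma map_mem {w : V ≃ₗ[ℝ] V} (hw : w ∈ weylGroup Φ) (hβ : β ∈ Φ) : w β ∈ Φ :=
  map_mem_of_mem_weylGroup h.rootReflection_mem hw hβ

lemma exists_inner_eq (c : V → ℝ) : ∃ x : V, ∀ γ ∈ Δ, ⟪x, γ⟫_ℝ = c γ := by
  obtain ⟨x, hx⟩ := exists_forall_inner_eq (v := fun γ : (Δ : Set V) ↦ (γ : V))
    h.linearIndepOn (fun γ ↦ c γ)
  exact ⟨x, fun γ hγ ↦ hx ⟨γ, hγ⟩⟩

lemma exists_height : ∃ ht : V →ₗ[ℝ] ℝ, ∀ γ ∈ Δ, ht γ = 1 :=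
  let ⟨x, hx⟩ := h.exists_inner_eq fun _ ↦ 1
  ⟨innerₗ V x, hx⟩

lemma exists_dual {δ : V} (hδ : δ ∈ Δ) :
    ∃ f : V →ₗ[ℝ] ℝ, f δ = 1 ∧ ∀ γ ∈ Δ, γ ≠ δ → f γ = 0 := by
  classical
  obtain ⟨x, hx⟩ := h.exists_inner_eq (Pi.single δ 1)
  exact ⟨innerₗ V x, by simpa using hx δ hδ, fun γ hγ hne ↦ by simpa [hne] using hx γ hγ⟩

lemma isNegRoot_neg_iff : IsNegRoot Φ Δ (-β) ↔ IsPosRoot Φ Δ β := by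
  constructor
  · rintro ⟨hβ, c, hc, hc0⟩
    refine ⟨neg_neg β ▸ h.neg_mem hβ, fun γ ↦ -c γ, ?_, fun γ hγ ↦ neg_nonneg.2 (hc0 γ hγ)⟩
    simp only [Int.cast_neg, neg_smul, Finset.sum_neg_distrib, ← hc, neg_neg]
  · rintro ⟨hβ, c, hc, hc0⟩
    refine ⟨h.neg_mem hβ, fun γ ↦ -c γ, ?_, fun γ hγ ↦ neg_nonpos.2 (hc0 γ hγ)⟩
    simp only [Int.cast_neg, neg_smul, Finset.sum_neg_distrib, ← hc]

lemma isPosRoot_neg_iff : IsPosRoot Φ Δ (-β) ↔ IsNegRoot Φ Δ β := by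
  rw [← h.isNegRoot_neg_iff, neg_neg]

lemma isPosRoot_or_isNegRoot (hβ : β ∈ Φ) : IsPosRoot Φ Δ β ∨ IsNegRoot Φ Δ β := by
  obtain ⟨c, hc, hc0 | hc0⟩ := h.exists_coeff β hβ
  · exact .inl ⟨hβ, c, hc, hc0⟩
  · exact .inr ⟨hβ, c, hc, hc0⟩

lemma map_nonpos (hβ : IsNegRoot Φ Δ β) (hf : ∀ γ ∈ Δ, 0 ≤ f γ) : f β ≤ 0 := by
  have hneg := (h.isPosRoot_neg_iff.2 hβ).map_nonneg hf
  rwa [map_neg, neg_nonneg] at hneg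

lemma isPosRoot_of_map_pos (hβ : β ∈ Φ) (hf : ∀ γ ∈ Δ, 0 ≤ f γ) (hfβ : 0 < f β) :
    IsPosRoot Φ Δ β :=
  (h.isPosRoot_or_isNegRoot hβ).resolve_right fun hneg ↦ (h.map_nonpos hneg hf).not_gt hfβ

lemma isPosRoot_of_mem {γ : V} (hγ : γ ∈ Δ) : IsPosRoot Φ Δ γ := by
  obtain ⟨ht, hht⟩ := h.exists_height
  refine h.isPosRoot_of_map_pos (f := ht) (h.mem_of_mem_base hγ) (fun δ hδ ↦ ?_) ?_
  · exact (hht δ hδ).symm ▸ zero_le_one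
  · exact (hht γ hγ).symm ▸ zero_lt_one

lemma exists_coeff_pos (hβ : IsPosRoot Φ Δ β) : ∃ c : V → ℤ,
    β = ∑ γ ∈ Δ, (c γ : ℝ) • γ ∧ (∀ γ ∈ Δ, 0 ≤ c γ) ∧ ∃ δ ∈ Δ, 0 < c δ := by
  obtain ⟨hβΦ, c, hc, hc0⟩ := hβ
  obtain ⟨δ, hδ, hδ0⟩ := Finset.exists_ne_zero_of_sum_ne_zero (hc ▸ h.ne_zero hβΦ)
  refine ⟨c, hc, hc0, δ, hδ, (hc0 δ hδ).lt_of_ne' fun hz ↦ hδ0 ?_⟩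
  rw [hz, Int.cast_zero, zero_smul]

lemma map_pos (hβ : IsPosRoot Φ Δ β) (hf : ∀ γ ∈ Δ, 0 < f γ) : 0 < f β := by
  obtain ⟨c, hc, hc0, δ, hδ, hcδ⟩ := h.exists_coeff_pos hβ
  rw [hc, map_sum]
  simp only [map_smul, smul_eq_mul]
  exact Finset.sum_pos' (fun γ hγ ↦ mul_nonneg (Int.cast_nonneg (hc0 γ hγ)) (hf γ hγ).le)
    ⟨δ, hδ, mul_pos (Int.cast_pos.2 hcδ) (hf δ hδ)⟩

lemma not_isPosRoot_of_isNegRoot (hβ : IsNegRoot Φ Δ β) : ¬ IsPosRoot Φ Δ β := fun hpos ↦ by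
  obtain ⟨ht, hht⟩ := h.exists_height
  have hht0 : ∀ γ ∈ Δ, 0 < ht γ := fun γ hγ ↦ (hht γ hγ).symm ▸ zero_lt_one
  exact (h.map_nonpos hβ fun γ hγ ↦ (hht0 γ hγ).le).not_gt (h.map_pos hpos hht0)

lemma rootReflection_eq_of_not_isPosRoot {δ : V} (hδ : δ ∈ Δ) (hβ : IsPosRoot Φ Δ β)
    (hneg : ¬ IsPosRoot Φ Δ (rootReflection δ β)) : rootReflection β = rootReflection δ := by
  have hδβ : IsNegRoot Φ Δ (rootReflection δ β) := (h.isPosRoot_or_isNegRoot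
    (h.rootReflection_mem δ (h.mem_of_mem_base hδ) β hβ.1)).resolve_left hneg
  obtain ⟨c, hc, -⟩ := hβ.2
  have hcoeff : ∀ γ ∈ Δ, γ ≠ δ → (c γ : ℝ) = 0 := fun γ hγ hne ↦ by
    obtain ⟨f, hfγ, hf⟩ := h.exists_dual hγ
    have hf0 : ∀ ε ∈ Δ, 0 ≤ f ε := forall_nonneg_of_dual hfγ hf
    have hfix : f (rootReflection δ β) = f β := by
      rw [rootReflection_apply, map_sub, map_smul, hf δ hδ hne.symm, smul_zero, sub_zero]
    have hfβ : f β = 0 := le_antisymm (hfix ▸ h.map_nonpos hδβ hf0) (hβ.map_nonneg hf0)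
    rwa [hc, map_sum_smul_eq_coeff hγ hfγ hf] at hfβ
  have hβδ : β = (c δ : ℝ) • δ := hc.trans <| Finset.sum_eq_single_of_mem δ hδ fun γ hγ hne ↦ by
    rw [hcoeff γ hγ hne, zero_smul]
  have hcδ : (c δ : ℝ) ≠ 0 := fun hz ↦ h.ne_zero hβ.1 (by rw [hβδ, hz, zero_smul])
  rw [hβδ, rootReflection_smul δ hcδ]

lemma exists_inner_pos (hβ : IsPosRoot Φ Δ β) : ∃ γ ∈ Δ, 0 < ⟪β, γ⟫_ℝ := by
  by_contra! hle
  have hβ0 : 0 < ⟪β, β⟫_ℝ := real_inner_self_pos.2 (h.ne_zero hβ.1)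
  have hneg : 0 ≤ -⟪β, β⟫_ℝ :=
    hβ.map_nonneg (f := -innerₗ V β) fun γ hγ ↦ neg_nonneg.2 (hle γ hγ)
  linarith

lemma rootReflection_mem_closure_of_isPosRoot (hβ : IsPosRoot Φ Δ β) :
    rootReflection β ∈ Subgroup.closure (rootReflection '' (Δ : Set V)) := by
  obtain ⟨ht, hht⟩ := h.exists_height
  obtain ⟨n, hn⟩ := hβ.exists_nat_eq_map hht
  induction n using Nat.strong_induction_on generalizing β with
  | h n ih =>
    obtain ⟨γ, hγ, hβγ⟩ := h.exists_inner_pos hβ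
    have hγcl : rootReflection γ ∈ Subgroup.closure (rootReflection '' (Δ : Set V)) :=
      Subgroup.subset_closure ⟨γ, hγ, rfl⟩
    by_cases hpos : IsPosRoot Φ Δ (rootReflection γ β)
    · obtain ⟨m, hm⟩ := hpos.exists_nat_eq_map hht
      have hlt : ht (rootReflection γ β) < ht β := by
        have hγγ : 0 < ⟪γ, γ⟫_ℝ := real_inner_self_pos.2 (h.ne_zero (h.mem_of_mem_base hγ))
        rw [rootReflection_apply, map_sub, map_smul, hht γ hγ, smul_eq_mul, mul_one]
        exact sub_lt_self _ (by positivity)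
      have hmn : m < n := by rwa [hm, hn, Nat.cast_lt] at hlt
      have hconj : rootReflection β =
          rootReflection γ * rootReflection (rootReflection γ β) * rootReflection γ := by
        rw [mul_assoc, ← mul_rootReflection (inner_rootReflection_rootReflection γ), ← mul_assoc,
          rootReflection_mul_self, one_mul]
      rw [hconj]
      exact mul_mem (mul_mem hγcl (ih m hmn hpos hm)) hγcl
    · rwa [h.rootReflection_eq_of_not_isPosRoot hγ hβ hpos]

lemma weylGroup_eq_closure_base :
    weylGroup Φ = Subgroup.closure (rootReflection '' (Δ : Set V)) := by
  rw [weylGroup_eq_closure_image]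
  refine le_antisymm ((Subgroup.closure_le _).2 ?_)
    (Subgroup.closure_mono (Set.image_mono h.subset))
  rintro _ ⟨β, hβ, rfl⟩
  rcases h.isPosRoot_or_isNegRoot hβ with hpos | hneg
  · exact h.rootReflection_mem_closure_of_isPosRoot hpos
  · rw [← rootReflection_neg]
    exact h.rootReflection_mem_closure_of_isPosRoot (h.isPosRoot_neg_iff.2 hneg)

section Words

open scoped Pointwise

lemma mem_weylGroup_of_mem_pow {n : ℕ} {w : V ≃ₗ[ℝ] V}
    (hw : w ∈ (rootReflection '' (Δ : Set V)) ^ n) : w ∈ weylGroup Φ := by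
  rw [h.weylGroup_eq_closure_base]
  induction n generalizing w with
  | zero =>
    rw [pow_zero, Set.mem_one] at hw
    exact hw ▸ one_mem _
  | succ n ih =>
    rw [pow_succ] at hw
    obtain ⟨u, hu, s, hs, rfl⟩ := hw
    exact mul_mem (ih hu) (Subgroup.subset_closure hs)

/-- The exchange condition, with `S ^ n` the set of elements written as words of length `n` in the
simple reflections. -/
lemma exists_mul_rootReflection_mem_pow {γ : V} (hγ : γ ∈ Δ) {n : ℕ} {w : V ≃ₗ[ℝ] V}
    (hw : w ∈ (rootReflection '' (Δ : Set V)) ^ n) (hneg : ¬ IsPosRoot Φ Δ (w γ)) :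
    ∃ m < n, w * rootReflection γ ∈ (rootReflection '' (Δ : Set V)) ^ m := by
  induction n generalizing w with
  | zero =>
    obtain rfl : w = 1 := by rwa [pow_zero, Set.mem_one] at hw
    exact absurd (h.isPosRoot_of_mem hγ) hneg
  | succ n ih =>
    rw [pow_succ'] at hw
    obtain ⟨_, ⟨δ, hδ, rfl⟩, u, hu, rfl⟩ := hw
    by_cases hpos : IsPosRoot Φ Δ (u γ)
    · refine ⟨n, n.lt_succ_self, ?_⟩
      have huγ := h.rootReflection_eq_of_not_isPosRoot hδ hpos hneg
      have hcancel : rootReflection δ * u * rootReflection γ = u := by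
        rw [mul_assoc, mul_rootReflection
          (inner_map_map_of_mem_weylGroup (h.mem_weylGroup_of_mem_pow hu)), huγ, ← mul_assoc,
          rootReflection_mul_self, one_mul]
      exact hcancel.symm ▸ hu
    · obtain ⟨m, hm, hmem⟩ := ih hu hpos
      refine ⟨m + 1, Nat.succ_lt_succ hm, ?_⟩
      rw [pow_succ', mul_assoc]
      exact Set.mul_mem_mul ⟨δ, hδ, rfl⟩ hmem

lemma eq_one_of_mem_pow {n : ℕ} {w : V ≃ₗ[ℝ] V} (hw : w ∈ (rootReflection '' (Δ : Set V)) ^ n)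
    (hpos : ∀ γ ∈ Δ, IsPosRoot Φ Δ (w γ)) : w = 1 := by
  induction n using Nat.strong_induction_on with
  | h n ih =>
    cases n with
    | zero => rwa [pow_zero, Set.mem_one] at hw
    | succ n =>
      rw [pow_succ] at hw
      obtain ⟨u, hu, _, ⟨γ, hγ, rfl⟩, rfl⟩ := hw
      have huγ : IsNegRoot Φ Δ (u γ) := by
        rw [← h.isPosRoot_neg_iff, ← map_neg, ← rootReflection_self]
        exact hpos γ hγ
      obtain ⟨m, hm, hmem⟩ :=
        h.exists_mul_rootReflection_mem_pow hγ hu (h.not_isPosRoot_of_isNegRoot huγ)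
      exact ih m (hm.trans n.lt_succ_self) hmem

lemma eq_one_of_forall_isPosRoot_map {w : V ≃ₗ[ℝ] V} (hw : w ∈ weylGroup Φ)
    (hpos : ∀ γ ∈ Δ, IsPosRoot Φ Δ (w γ)) : w = 1 := by
  rw [h.weylGroup_eq_closure_base] at hw
  have hinv : (rootReflection '' (Δ : Set V))⁻¹ = rootReflection '' (Δ : Set V) := by
    rw [← Set.image_inv_eq_inv, Set.image_image]
    simp only [rootReflection_inv]
  obtain ⟨n, hn⟩ := exists_mem_pow_of_mem_closure hinv hw
  exact h.eq_one_of_mem_pow hn hpos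

end Words

lemma mem_base_of_map_le_one (hβ : IsPosRoot Φ Δ β) (hf : ∀ γ ∈ Δ, f γ = 1) (hfβ : f β ≤ 1) :
    β ∈ Δ := by
  classical
  obtain ⟨c, hc, hc0, δ, hδ, hcδ⟩ := h.exists_coeff_pos hβ
  have hsum : ∑ γ ∈ Δ, c γ ≤ 1 := by
    rw [hc, map_sum, Finset.sum_congr rfl fun γ hγ ↦ by
      rw [map_smul, hf γ hγ, smul_eq_mul, mul_one]] at hfβ
    exact_mod_cast hfβ
  rw [← Finset.add_sum_erase Δ c hδ] at hsum
  have hrest0 : ∀ γ ∈ Δ.erase δ, 0 ≤ c γ := fun γ hγ ↦ hc0 γ (Finset.mem_of_mem_erase hγ)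
  have hrest : ∑ γ ∈ Δ.erase δ, c γ = 0 := by linarith [Finset.sum_nonneg hrest0]
  have hcδ1 : c δ = 1 := by linarith
  have hβδ : β = δ := by
    rw [hc, Finset.sum_eq_single_of_mem δ hδ fun γ hγ hne ↦ by
      rw [(Finset.sum_eq_zero_iff_of_nonneg hrest0).1 hrest γ (Finset.mem_erase.2 ⟨hne, hγ⟩),
        Int.cast_zero, zero_smul], hcδ1, Int.cast_one, one_smul]
  exact hβδ ▸ hδ

/-- The inverse of `f` does not lower the height of a simple root, hence neither that of the
positive root `f δ`. -/
lemma map_mem_base {f : V ≃ₗ[ℝ] V} (hf : ∀ γ ∈ Δ, IsPosRoot Φ Δ (f γ))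
    (hfsymm : ∀ γ ∈ Δ, f.symm γ ∈ Φ) {δ : V} (hδ : δ ∈ Δ) : f δ ∈ Δ := by
  obtain ⟨ht, hht⟩ := h.exists_height
  have hht0 : ∀ γ ∈ Δ, 0 < ht γ := fun γ hγ ↦ (hht γ hγ).symm ▸ zero_lt_one
  have hsymm_pos : ∀ γ ∈ Δ, IsPosRoot Φ Δ (f.symm γ) := fun γ hγ ↦ by
    refine h.isPosRoot_of_map_pos (f := ht ∘ₗ f) (hfsymm γ hγ) (fun ε hε ↦ ?_) ?_
    · exact (h.map_pos (hf ε hε) hht0).le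
    · simpa using hht0 γ hγ
  have hsymm_ge : ∀ γ ∈ Δ, 1 ≤ ht (f.symm γ) := fun γ hγ ↦ by
    obtain ⟨n, hn⟩ := (hsymm_pos γ hγ).exists_nat_eq_map hht
    have hpos := h.map_pos (hsymm_pos γ hγ) hht0
    rw [hn] at hpos ⊢
    exact_mod_cast hpos
  have hle : 0 ≤ ht (f.symm (f δ)) - ht (f δ) :=
    (hf δ hδ).map_nonneg (f := ht ∘ₗ f.symm - ht) fun γ hγ ↦
      sub_nonneg.2 ((hht γ hγ).trans_le (hsymm_ge γ hγ))
  rw [f.symm_apply_apply, hht δ hδ, sub_nonneg] at hle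
  exact h.mem_base_of_map_le_one (hf δ hδ) hht hle

/-- With `ρ` pairing to `1` with each simple root, the element `w` is chosen to minimise the height
of `w ρ`: as `ht (w s_γ ρ) = ht (w ρ) - 2 ht (w γ) / ⟪γ, γ⟫`, no `w γ` can be positive. -/
lemma exists_forall_isNegRoot_map : ∃ w ∈ weylGroup Φ, ∀ γ ∈ Δ, IsNegRoot Φ Δ (w γ) := by
  obtain ⟨ht, hht⟩ := h.exists_height
  obtain ⟨ρ, hρ⟩ := h.exists_inner_eq fun _ ↦ 1
  have := finite_weylGroup h.rootReflection_mem
  obtain ⟨w, hw⟩ := Finite.exists_min fun w : weylGroup Φ ↦ ht (w.1 ρ)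
  refine ⟨w, w.2, fun γ hγ ↦ ?_⟩
  have hγΦ := h.mem_of_mem_base hγ
  refine (h.isPosRoot_or_isNegRoot (h.map_mem w.2 hγΦ)).resolve_left fun hpos ↦ ?_
  have hmin : ht (w.1 ρ) ≤ ht (w.1 (rootReflection γ ρ)) :=
    hw ⟨w.1 * rootReflection γ, mul_mem w.2 (rootReflection_mem_weylGroup hγΦ)⟩
  have hγγ : 0 < ⟪γ, γ⟫_ℝ := real_inner_self_pos.2 (h.ne_zero hγΦ)
  have hwγ : 0 < ht (w.1 γ) := h.map_pos hpos fun δ hδ ↦ (hht δ hδ).symm ▸ zero_lt_one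
  rw [rootReflection_apply, hρ γ hγ, map_sub, map_sub, map_smul, map_smul, smul_eq_mul] at hmin
  have : 0 < 2 * 1 / ⟪γ, γ⟫_ℝ * ht (w.1 γ) := by positivity
  linarith

lemma exists_forall_neg_map_mem_base : ∃ w ∈ weylGroup Φ, ∀ γ ∈ Δ, -w γ ∈ Δ := by
  obtain ⟨w, hw, hneg⟩ := h.exists_forall_isNegRoot_map
  refine ⟨w, hw, fun γ hγ ↦ ?_⟩
  refine h.map_mem_base (f := w.trans (LinearEquiv.neg ℝ)) (fun δ hδ ↦ ?_) (fun δ hδ ↦ ?_) hγ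
  · exact h.isPosRoot_neg_iff.2 (hneg δ hδ)
  · exact h.map_mem (w := w⁻¹) (inv_mem hw) (h.neg_mem (h.mem_of_mem_base hδ))

lemma isRootBase_of_subset {θ Ψ : Finset V} (hθ : θ ⊆ Δ)
    (hΨ : ∀ β, β ∈ Ψ ↔ β ∈ Φ ∧ β ∈ Submodule.span ℝ (θ : Set V)) : IsRootBase Ψ θ where
  zero_notMem hmem := h.zero_notMem ((hΨ 0).1 hmem).1
  rootReflection_mem a ha b hb := by
    obtain ⟨haΦ, haθ⟩ := (hΨ a).1 ha
    obtain ⟨hbΦ, hbθ⟩ := (hΨ b).1 hb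
    refine (hΨ _).2 ⟨h.rootReflection_mem a haΦ b hbΦ, ?_⟩
    rw [rootReflection_apply]
    exact sub_mem hbθ (Submodule.smul_mem _ _ haθ)
  subset γ hγ := (hΨ γ).2 ⟨h.subset (hθ hγ), Submodule.subset_span hγ⟩
  linearIndepOn := h.linearIndepOn.mono (Finset.coe_subset.2 hθ)
  exists_coeff β hβ := by
    obtain ⟨hβΦ, hβθ⟩ := (hΨ β).1 hβ
    obtain ⟨c, hc, hc0⟩ := h.exists_coeff β hβΦ
    refine ⟨c, ?_, hc0.imp (fun hc0 γ hγ ↦ hc0 γ (hθ hγ)) (fun hc0 γ hγ ↦ hc0 γ (hθ hγ))⟩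
    have hcoeff : ∀ δ ∈ Δ, δ ∉ θ → (c δ : ℝ) = 0 := fun δ hδ hδθ ↦ by
      obtain ⟨f, hfδ, hf⟩ := h.exists_dual hδ
      have hker : Submodule.span ℝ (θ : Set V) ≤ f.ker :=
        Submodule.span_le.2 fun γ hγ ↦ hf γ (hθ hγ) (ne_of_mem_of_not_mem hγ hδθ)
      rw [← map_sum_smul_eq_coeff (c := fun γ ↦ (c γ : ℝ)) hδ hfδ hf, ← hc]
      exact hker hβθ
    exact hc.trans (Finset.sum_subset hθ fun δ hδ hδθ ↦ by rw [hcoeff δ hδ hδθ, zero_smul]).symm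

lemma isNegRoot_map_of_forall_neg_map_mem_base {w : V ≃ₗ[ℝ] V} (hw : w ∈ weylGroup Φ)
    (hneg : ∀ γ ∈ Δ, -w γ ∈ Δ) (hβ : IsPosRoot Φ Δ β) : IsNegRoot Φ Δ (w β) := by
  obtain ⟨ht, hht⟩ := h.exists_height
  have hpos : 0 < ht (-w β) := h.map_pos (f := ht ∘ₗ (-(w : V →ₗ[ℝ] V))) hβ fun γ hγ ↦
    (hht _ (hneg γ hγ)).symm ▸ zero_lt_one
  rw [← h.isPosRoot_neg_iff]
  exact h.isPosRoot_of_map_pos (h.neg_mem (h.map_mem hw hβ.1))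
    (fun γ hγ ↦ (hht γ hγ).symm ▸ zero_le_one) hpos

section MaximalParabolic

variable {α : V}

lemma exists_isNegRoot_map_of_maximal (hα : α ∈ Δ) : ∃ w ∈ weylGroup Φ,
    (∀ β ∈ (Δ : Set V) \ {α}, w β ∈ Δ) ∧ IsNegRoot Φ Δ (w α) := by
  classical
  obtain ⟨g, hgα, hg⟩ := h.exists_dual hα
  let Ψ := Φ.filter (· ∈ Submodule.span ℝ (Δ.erase α : Set V))
  have hΨ : IsRootBase Ψ (Δ.erase α) :=
    h.isRootBase_of_subset (Finset.erase_subset α Δ) fun _ ↦ Finset.mem_filter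
  have hΨker : Submodule.span ℝ (Ψ : Set V) ≤ g.ker :=
    Submodule.span_le.2 fun β hβ ↦ Submodule.span_le.2
      (fun γ hγ ↦ hg γ (Finset.mem_of_mem_erase hγ) (Finset.ne_of_mem_erase hγ))
      (Finset.mem_filter.1 hβ).2
  obtain ⟨u, hu, huθ⟩ := hΨ.exists_forall_neg_map_mem_base
  obtain ⟨w₀, hw₀, hw₀Δ⟩ := h.exists_forall_neg_map_mem_base
  have huΦ : u ∈ weylGroup Φ := weylGroup_mono (Finset.filter_subset _ _) hu
  refine ⟨w₀ * u, mul_mem hw₀ huΦ, fun β hβ ↦ ?_, ?_⟩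
  · have huβ : -u β ∈ Δ := Finset.mem_of_mem_erase (huθ β (Finset.mem_erase.2 hβ.symm))
    simpa using hw₀Δ _ huβ
  · have hguα : g (u α) = 1 := by
      have hker : g (u α - α) = 0 := hΨker (map_sub_self_mem_span_of_mem_weylGroup hu α)
      rwa [map_sub, hgα, sub_eq_zero] at hker
    have huα : IsPosRoot Φ Δ (u α) := h.isPosRoot_of_map_pos
      (h.map_mem huΦ (h.mem_of_mem_base hα)) (forall_nonneg_of_dual hgα hg)
      (hguα.symm ▸ zero_lt_one)
    exact h.isNegRoot_map_of_forall_neg_map_mem_base (w := w₀) hw₀ hw₀Δ huα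

/-- The roots `w β`, for `β ≠ α` simple, are all simple roots but one; on the last one
`g ∘ w⁻¹` cannot be nonnegative since `w α` is negative and `g α = 1`. -/
lemma exists_eq_or_map_symm_neg {g : V →ₗ[ℝ] ℝ} {w : V ≃ₗ[ℝ] V}
    (hα : α ∈ Δ) (hgα : g α = 1) (hg : ∀ γ ∈ Δ, γ ≠ α → g γ = 0)
    (hw : ∀ β ∈ (Δ : Set V) \ {α}, w β ∈ Δ) (hwα : IsNegRoot Φ Δ (w α)) {γ : V} (hγ : γ ∈ Δ) :
    (∃ β ∈ (Δ : Set V) \ {α}, w β = γ) ∨ g (w.symm γ) < 0 := by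
  classical
  obtain ⟨δ, hδ, hgδ⟩ : ∃ δ ∈ Δ, g (w.symm δ) < 0 := by
    by_contra! hge
    have hle : g (w.symm (w α)) ≤ 0 := h.map_nonpos (f := g ∘ₗ w.symm) hwα hge
    rw [w.symm_apply_apply, hgα] at hle
    exact hle.not_gt zero_lt_one
  have hδw : δ ∉ (Δ.erase α).image w := fun hmem ↦ by
    obtain ⟨β, hβ, rfl⟩ := Finset.mem_image.1 hmem
    rw [w.symm_apply_apply, hg β (Finset.mem_of_mem_erase hβ) (Finset.ne_of_mem_erase hβ)] at hgδ
    exact hgδ.false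
  have hsub : insert δ ((Δ.erase α).image w) ⊆ Δ :=
    Finset.insert_subset hδ (Finset.image_subset_iff.2 fun β hβ ↦
      hw β (Finset.mem_erase.1 hβ).symm)
  have hcard : Δ.card ≤ (insert δ ((Δ.erase α).image w)).card := by
    rw [Finset.card_insert_of_notMem hδw, Finset.card_image_of_injective _ w.injective,
      Finset.card_erase_add_one hα]
  rw [← Finset.eq_of_subset_of_card_le hsub hcard, Finset.mem_insert] at hγ
  rcases hγ with rfl | hγ
  · exact .inr hgδ
  · obtain ⟨β, hβ, hβγ⟩ := Finset.mem_image.1 hγ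
    exact .inl ⟨β, (Finset.mem_erase.1 hβ).symm, hβγ⟩

lemma eq_of_isNegRoot_map_of_maximal {w w' : V ≃ₗ[ℝ] V} (hα : α ∈ Δ)
    (hwW : w ∈ weylGroup Φ) (hw : ∀ β ∈ (Δ : Set V) \ {α}, w β ∈ Δ)
    (hwα : IsNegRoot Φ Δ (w α)) (hwW' : w' ∈ weylGroup Φ)
    (hw' : ∀ β ∈ (Δ : Set V) \ {α}, w' β ∈ Δ) (hwα' : IsNegRoot Φ Δ (w' α)) : w = w' := by
  obtain ⟨g, hgα, hg⟩ := h.exists_dual hα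
  have hW : w' * w⁻¹ ∈ weylGroup Φ := mul_mem hwW' (inv_mem hwW)
  refine (mul_inv_eq_one.1 (h.eq_one_of_forall_isPosRoot_map hW fun γ hγ ↦ ?_)).symm
  rcases h.exists_eq_or_map_symm_neg hα hgα hg hw hwα hγ with ⟨β, hβ, rfl⟩ | hneg
  · have hβ' : (w' * w⁻¹) (w β) = w' β := congrArg w' (w.symm_apply_apply β)
    exact hβ' ▸ h.isPosRoot_of_mem (hw' β hβ)
  · refine h.isPosRoot_of_map_pos (f := -(g ∘ₗ w'.symm)) (h.map_mem hW (h.mem_of_mem_base hγ))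
      (fun δ hδ ↦ neg_nonneg.2 ?_) (neg_pos.2 ?_)
    · rcases h.exists_eq_or_map_symm_neg hα hgα hg hw' hwα' hδ with ⟨β, hβ, rfl⟩ | hneg'
      · simpa using (hg β hβ.1 hβ.2).le
      · exact hneg'.le
    · have hcancel : w'.symm ((w' * w⁻¹) γ) = w.symm γ := w'.symm_apply_apply _
      exact (congrArg g hcancel).trans_lt hneg

end MaximalParabolic

end IsRootBase

end Positivity

theorem exists_unique_weyl_elt_mapping_theta_into_simples_general {Φ Δ : Finset V}
    (h : IsRootBase Φ Δ) {α : V} (hα : α ∈ Δ) :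
    ∃! w : weylGroup Φ,
      (∀ β ∈ (Δ : Set V) \ {α}, (w : V ≃ₗ[ℝ] V) β ∈ Δ) ∧
        IsNegRoot Φ Δ ((w : V ≃ₗ[ℝ] V) α) := by
  obtain ⟨w, hW, hw, hwα⟩ := h.exists_isNegRoot_map_of_maximal hα
  exact ⟨⟨w, hW⟩, ⟨hw, hwα⟩, fun w' ⟨hw', hwα'⟩ ↦
    Subtype.ext (h.eq_of_isNegRoot_map_of_maximal hα w'.2 hw' hwα' hW hw hwα)⟩

theorem exists_unique_weyl_elt_mapping_theta_into_simples
    [FiniteDimensional ℝ V]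
    (Φ Δ : Finset V)
    -- Φ is a root system in V:
    (h0 : (0 : V) ∉ Φ)
    (hspan : Submodule.span ℝ (Φ : Set V) = ⊤)
    (hrefl : ∀ a ∈ Φ, ∀ b ∈ Φ, b - (2 * ⟪b, a⟫_ℝ / ⟪a, a⟫_ℝ) • a ∈ Φ)
    -- Φ is crystallographic:
    (hcryst : ∀ a ∈ Φ, ∀ b ∈ Φ, ∃ n : ℤ, 2 * ⟪b, a⟫_ℝ / ⟪a, a⟫_ℝ = (n : ℝ))
    -- Φ is reduced:
    (hred : ∀ a ∈ Φ, ∀ t : ℝ, t • a ∈ Φ → t = 1 ∨ t = -1)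
    -- Δ is a base of Φ:
    (hΔΦ : (Δ : Set V) ⊆ (Φ : Set V))
    (hind : LinearIndependent ℝ (fun γ : (Δ : Set V) => (γ : V)))
    (hbase : ∀ β ∈ Φ, ∃ c : V → ℤ,
      β = ∑ γ ∈ Δ, (c γ : ℝ) • γ ∧ ((∀ γ ∈ Δ, 0 ≤ c γ) ∨ (∀ γ ∈ Δ, c γ ≤ 0)))
    -- the fixed simple root α, with θ = Δ \ {α}:
    (α : V) (hα : α ∈ Δ) :
    ∃! w : weylGroup Φ,
      (∀ β ∈ (Δ : Set V) \ {α}, (w : V ≃ₗ[ℝ] V) β ∈ Δ) ∧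
        IsNegRoot Φ Δ ((w : V ≃ₗ[ℝ] V) α) := by
  exact exists_unique_weyl_elt_mapping_theta_into_simples_general ⟨h0,
    fun a ha b hb ↦ by rw [rootReflection_apply]; exact hrefl a ha b hb, hΔΦ, hind, hbase⟩ hα
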